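/- Let N ≥ 1, p ∈ ℂ^N and t ∈ ℂ^{N+1} with |Im p_i| < 2 and p_i ≠ 0 for i = 1,…,N, and |Im t_j| < π/2 for j = 1,…,N+1 with t_j ≠ t_k for 1 ≤ j < k ≤ N+1. Then ∫_{ℝ^N} exp(i z·p) ∏_{1≤j<k≤N} sinh(z_j−z_k) / ∏_{j=1}^{N+1} ∏_{k=1}^{N} cosh(t_j−z_k) dz = ∏_{j=1}^{N} (−iπ/sinh(π p_j/2)) · ∏_{1≤j<k≤N+1} (1/sinh(t_j−t_k)) · Σ_{τ∈S_{N+1}} sgn(τ) · exp(i Σ_{j=1}^{N} t_{τ(j)} p_j), where the sum is over all permutations τ of {1,…,N+1}. -/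

import Mathlib

open MeasureTheory Complex

/-!
Write `k_p(a, b; z) = e^{ipz} sinh (a - b) / (cosh (a - z) cosh (b - z))`. A hyperbolic form of
Cauchy's determinant identifies the integrand with `det (k_{p_k}(t_j, t_{N+1}; z_k))` divided by
`∏_{j<k} sinh (t_j - t_k)`. Each column depends on a single variable, so the integral is the
determinant of the one-dimensional integrals
`∫ k_p(a, b; x) dx = -iπ / sinh (πp/2) * (e^{ipa} - e^{ipb})`,
and a determinant of differences `e^{ipa} - e^{ipb}` is an `(N + 1) × (N + 1)` determinant with a
column of ones, expanded over `S_{N+1}`.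

The one-dimensional integral comes from `k_p(a, b; z + iπ) = e^{-πp} k_p(a, b; z)` by shifting the
contour by `iπ`. Since `k_p(a, b; z) = e^{ipz} (tanh (a - z) - tanh (b - z))`, subtracting from
`e^{ipz}` in each summand its value at the pole `a + iπ/2`, respectively `b + iπ/2`, removes the
poles in the strip `0 ≤ Im z ≤ π`. The subtracted multiples of `tanh` are `iπ`-periodic, so they
drop out of the difference between the two horizontal lines, while their limits `±1` at the ends
of the strip produce the value of the integral.
-/

section Determinants

open Matrix

variable {n : ℕ}

theorem prod_filter_lt_castSucc {M : Type*} [CommMonoid M] (f : Fin (n + 1) → Fin (n + 1) → M) :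
    ∏ q : Fin (n + 1) × Fin (n + 1) with q.1 < q.2, f q.1 q.2 =
      (∏ q : Fin n × Fin n with q.1 < q.2, f q.1.castSucc q.2.castSucc) *
        ∏ j : Fin n, f j.castSucc (Fin.last n) := by
  simp only [Finset.prod_filter, Fintype.prod_prod_type, Fin.prod_univ_castSucc,
    Fin.castSucc_lt_castSucc_iff, Fin.castSucc_lt_last, (Fin.le_last _).not_gt, if_true, if_false,
    Finset.prod_const_one, Finset.prod_mul_distrib, mul_one]

theorem det_eq_mul_det_sub_of_last_col {R : Type*} [CommRing R]
    (A : Matrix (Fin (n + 1)) (Fin (n + 1)) R) (c : Fin n → R)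
    (hc : ∀ j : Fin n, A j.castSucc (Fin.last n) = c j * A (Fin.last n) (Fin.last n)) :
    A.det = A (Fin.last n) (Fin.last n) *
      (of fun j k : Fin n => A j.castSucc k.castSucc - c j * A (Fin.last n) k.castSucc).det := by
  let d : Fin (n + 1) → R := Fin.snoc (fun j => -c j) 0
  let B : Matrix (Fin (n + 1)) (Fin (n + 1)) R := of fun i k => A i k + d i * A (Fin.last n) k
  have det_B : B.det = A.det :=
    det_eq_of_forall_row_eq_smul_add_const d (Fin.last n) (Fin.snoc_last _ _) fun _ _ => rfl
  have B_last_col : ∀ j : Fin n, B j.castSucc (Fin.last n) = 0 := fun j => by simp [B, d, hc]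
  have even_sign : (-1 : R) ^ (n + n) = 1 := (Even.add_self n).neg_one_pow
  rw [← det_B, det_succ_column B (Fin.last n), Fin.sum_univ_castSucc,
    Finset.sum_eq_zero fun j _ => by rw [B_last_col, mul_zero, zero_mul], zero_add]
  simp only [Fin.val_last, even_sign, one_mul]
  congr 2
  · simp [B, d]
  · ext j k
    simp [B, d, sub_eq_add_neg]

theorem det_inv_eq_of_exchange_relation {K : Type*} [Field K] (m x y : Fin n → Fin n → K)
    (hm : ∀ j k, m j k ≠ 0)
    (hxy : ∀ j k l, m j l * m l k - m l l * m j k = x j l * y k l) :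
    (of fun j k => (m j k)⁻¹).det =
      (∏ q : Fin n × Fin n with q.1 < q.2, x q.1 q.2) *
        (∏ q : Fin n × Fin n with q.1 < q.2, y q.1 q.2) / ∏ j, ∏ k, m j k := by
  induction n with
  | zero => simp
  | succ n ih =>
    let l := Fin.last n
    have row_reduction (j k : Fin n) :
        (m j.castSucc k.castSucc)⁻¹ - m l l / m j.castSucc l * (m l k.castSucc)⁻¹ =
          x j.castSucc l / m j.castSucc l *
            (y k.castSucc l / m l k.castSucc * (m j.castSucc k.castSucc)⁻¹) := by
      have hjk := hm j.castSucc k.castSucc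
      have hjl := hm j.castSucc l
      have hlk := hm l k.castSucc
      field_simp
      linear_combination hxy j.castSucc k.castSucc l
    have eliminate_last_col := det_eq_mul_det_sub_of_last_col (of fun j k => (m j k)⁻¹)
      (fun j => m l l / m j.castSucc l) fun j => by
        rw [of_apply, of_apply, div_mul_eq_mul_div, mul_inv_cancel₀ (hm l l), one_div]
    have pull_out_rows := det_mul_column (fun j => x j.castSucc l / m j.castSucc l)
      (of fun j k : Fin n => y k.castSucc l / m l k.castSucc * (m j.castSucc k.castSucc)⁻¹)
    have pull_out_cols := det_mul_row (fun k => y k.castSucc l / m l k.castSucc)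
      (of fun j k : Fin n => (m j.castSucc k.castSucc)⁻¹)
    simp only [of_apply] at eliminate_last_col pull_out_rows pull_out_cols
    simp only [eliminate_last_col, l, row_reduction, pull_out_rows, pull_out_cols,
      ih (fun j k => m j.castSucc k.castSucc) (fun j k => x j.castSucc k.castSucc)
        (fun j k => y j.castSucc k.castSucc) (fun _ _ => hm _ _) (fun _ _ _ => hxy _ _ _),
      prod_filter_lt_castSucc, Fin.prod_univ_castSucc, Finset.prod_mul_distrib,
      Finset.prod_div_distrib]
    ring

theorem det_inv_cosh_sub (t z : Fin n → ℂ) (h : ∀ j k, cosh (t j - z k) ≠ 0) :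
    (of fun j k => (cosh (t j - z k))⁻¹).det =
      (∏ q : Fin n × Fin n with q.1 < q.2, sinh (t q.1 - t q.2)) *
        (∏ q : Fin n × Fin n with q.1 < q.2, sinh (z q.1 - z q.2)) /
          ∏ j, ∏ k, cosh (t j - z k) := by
  refine det_inv_eq_of_exchange_relation (fun j k => cosh (t j - z k))
    (fun j k => sinh (t j - t k)) (fun j k => sinh (z j - z k)) h fun j k l => ?_
  simp only [cosh_sub, sinh_sub]
  ring

theorem det_sinh_sub_div_cosh_mul_cosh (t : Fin (n + 1) → ℂ) (z : Fin n → ℂ)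
    (h : ∀ j k, cosh (t j - z k) ≠ 0) :
    (of fun j k : Fin n => sinh (t j.castSucc - t (Fin.last n)) /
        (cosh (t j.castSucc - z k) * cosh (t (Fin.last n) - z k))).det =
      (∏ q : Fin (n + 1) × Fin (n + 1) with q.1 < q.2, sinh (t q.1 - t q.2)) *
        (∏ q : Fin n × Fin n with q.1 < q.2, sinh (z q.1 - z q.2)) /
          ∏ j, ∏ k, cosh (t j - z k) := by
  have factor_entries : (of fun j k : Fin n => sinh (t j.castSucc - t (Fin.last n)) /
        (cosh (t j.castSucc - z k) * cosh (t (Fin.last n) - z k))) =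
      of fun j k => sinh (t j.castSucc - t (Fin.last n)) *
        of (fun j k => (cosh (t (Fin.last n) - z k))⁻¹ *
          of (fun j k : Fin n => (cosh (t j.castSucc - z k))⁻¹) j k) j k := by
    ext j k
    simp only [of_apply, div_eq_mul_inv, mul_inv]
    ring
  rw [factor_entries, det_mul_column, det_mul_row,
    det_inv_cosh_sub (fun j => t j.castSucc) z fun _ _ => h _ _,
    prod_filter_lt_castSucc fun i j => sinh (t i - t j)]
  simp only [Fin.prod_univ_castSucc, Finset.prod_inv_distrib, div_eq_mul_inv, mul_inv]
  ring

-- Both sides are the determinant of `E` bordered by a column of ones.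
theorem det_sub_last_row {R : Type*} [CommRing R] (E : Matrix (Fin (n + 1)) (Fin n) R) :
    (of fun j k : Fin n => E j.castSucc k - E (Fin.last n) k).det =
      ∑ τ : Equiv.Perm (Fin (n + 1)), ((Equiv.Perm.sign τ : ℤ) : R) *
        ∏ j : Fin n, E (τ j.castSucc) j := by
  let bordered : Matrix (Fin (n + 1)) (Fin (n + 1)) R :=
    of fun i => Fin.snoc (α := fun _ => R) (E i) 1
  have det_bordered := det_eq_mul_det_sub_of_last_col bordered (fun _ => 1) (by simp [bordered])
  simp only [bordered, of_apply, Fin.snoc_last, Fin.snoc_castSucc, one_mul] at det_bordered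
  rw [← det_bordered, det_apply']
  simp [Fin.prod_univ_castSucc]

theorem integral_det_eq_det_integral {ι 𝕜 : Type*} [Fintype ι] [DecidableEq ι] [RCLike 𝕜]
    {X : ι → Type*} {mX : ∀ k, MeasurableSpace (X k)} {μ : ∀ k, Measure (X k)}
    [∀ k, SigmaFinite (μ k)] {f : ι → ∀ k, X k → 𝕜} (hf : ∀ j k, Integrable (f j k) (μ k)) :
    ∫ x, (of fun j k => f j k (x k)).det ∂Measure.pi μ =
      (of fun j k => ∫ x, f j k x ∂μ k).det := by
  simp only [det_apply', of_apply]
  rw [integral_finsetSum _ fun σ _ =>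
    (Integrable.fintype_prod_dep fun k => hf (σ k) k).const_mul _]
  simp only [integral_const_mul, integral_fintype_prod_eq_prod fun k => f _ k]

end Determinants

section Strip

open Filter Topology Set

/-- The closed horizontal strip `0 ≤ Im z ≤ h`. -/
def closedStrip (h : ℝ) : Set ℂ := im ⁻¹' Icc 0 h

/-- The filter on `ℂ` describing `Re z → l` inside the strip `0 ≤ Im z ≤ h`; convergence along it
is uniform in `Im z`. Taking `l` to be `atTop`, `atBot` or `cocompact ℝ` gives the right end, the
left end, or both ends of the strip. -/
def stripEnd (h : ℝ) (l : Filter ℝ) : Filter ℂ := comap re l ⊓ 𝓟 (closedStrip h)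

variable {E : Type*} [NormedAddCommGroup E] [NormedSpace ℂ E] {K : ℂ → E} {h : ℝ} {l : Filter ℝ}

theorem tendsto_re_stripEnd : Tendsto re (stripEnd h l) l :=
  tendsto_comap.mono_left inf_le_left

theorem stripEnd_mono {l₁ l₂ : Filter ℝ} (hl : l₁ ≤ l₂) : stripEnd h l₁ ≤ stripEnd h l₂ :=
  inf_le_inf_right _ (comap_mono hl)

theorem tendsto_ofReal_stripEnd (hh : 0 ≤ h) : Tendsto ((↑) : ℝ → ℂ) l (stripEnd h l) :=
  tendsto_inf.2 ⟨tendsto_comap_iff.2 tendsto_id, tendsto_principal.2 <| .of_forall fun x => by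
    simp [closedStrip, hh]⟩

theorem tendsto_add_mul_I_stripEnd :
    Tendsto (fun q : ℝ × ℝ => (q.1 + q.2 * I : ℂ)) (l ×ˢ 𝓟 (Icc 0 h)) (stripEnd h l) := by
  refine tendsto_inf.2 ⟨tendsto_comap_iff.2 ?_, tendsto_principal.2 ?_⟩
  · simpa [Function.comp_def] using tendsto_fst (f := l) (g := 𝓟 (Icc 0 h))
  · filter_upwards [prod_mem_prod univ_mem (mem_principal_self (Icc 0 h))] with q hq
    simpa [closedStrip] using hq

theorem tendsto_integral_vertical [CompleteSpace E] [l.IsCountablyGenerated] (hh : 0 ≤ h)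
    (hK : ContinuousOn K (closedStrip h)) {L : E} (hL : Tendsto K (stripEnd h l) (𝓝 L)) :
    Tendsto (fun R : ℝ => ∫ y in (0 : ℝ)..h, K (R + y * I)) l (𝓝 (h • L)) := by
  have uniform :
      TendstoUniformlyOn (fun (R y : ℝ) => K (R + y * I)) (fun _ => L) l (uIcc 0 h) := by
    rw [uIcc_of_le hh, tendstoUniformlyOn_iff_tendsto]
    exact Uniform.tendsto_nhds_right.1 (hL.comp tendsto_add_mul_I_stripEnd)
  have continuous_segment (R : ℝ) : ContinuousOn (fun y : ℝ => K (R + y * I)) (uIcc 0 h) :=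
    hK.comp (by fun_prop) fun y hy => by simpa [closedStrip, uIcc_of_le hh] using hy
  simpa only [intervalIntegral.integral_const, sub_zero] using
    uniform.tendsto_intervalIntegral_of_continuousOn (μ := volume) (.of_forall continuous_segment)

theorem integral_boundary_strip (hh : 0 ≤ h) (hK : DifferentiableOn ℂ K (closedStrip h)) (R : ℝ) :
    ∫ x in (-R)..R, (K x - K (x + h * I)) =
      I • (∫ y in (0 : ℝ)..h, K ((-R : ℝ) + y * I)) - I • ∫ y in (0 : ℝ)..h, K (R + y * I) := by
  have rectangle := integral_boundary_rect_eq_zero_of_differentiableOn K (-R : ℝ) (R + h * I)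
    (hK.mono fun z hz => by simpa [closedStrip, uIcc_of_le hh] using (mem_reProdIm.1 hz).2)
  have continuous_line (c : ℝ) (hc : c ∈ Icc 0 h) : Continuous fun x : ℝ => K (x + c * I) :=
    hK.continuousOn.comp_continuous (by fun_prop) fun x => by simpa [closedStrip] using hc
  have bottom := (continuous_line 0 ⟨le_rfl, hh⟩).intervalIntegrable (μ := volume) (-R) R
  have top := (continuous_line h ⟨hh, le_rfl⟩).intervalIntegrable (μ := volume) (-R) R
  simp only [ofReal_zero, zero_mul, add_zero] at bottom
  rw [intervalIntegral.integral_sub bottom top]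
  simp only [ofReal_re, ofReal_im, add_re, add_im, mul_re, mul_im, I_re, I_im, ofReal_zero,
    zero_mul, mul_zero, mul_one, add_zero, zero_add, sub_zero] at rectangle
  rw [sub_add_eq_add_sub, sub_sub, sub_eq_zero] at rectangle
  rw [sub_eq_sub_iff_add_eq_add, rectangle, add_comm]

theorem tendsto_integral_sub_shift_of_differentiableOn_strip [CompleteSpace E] (hh : 0 ≤ h)
    (hK : DifferentiableOn ℂ K (closedStrip h)) {L L' : E}
    (hbot : Tendsto K (stripEnd h atBot) (𝓝 L)) (htop : Tendsto K (stripEnd h atTop) (𝓝 L')) :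
    Tendsto (fun R : ℝ => ∫ x in (-R)..R, (K x - K (x + h * I))) atTop
      (𝓝 (I • h • L - I • h • L')) := by
  simp only [integral_boundary_strip hh hK]
  exact (((tendsto_integral_vertical hh hK.continuousOn hbot).comp
    tendsto_neg_atTop_atBot).const_smul I).sub
      ((tendsto_integral_vertical hh hK.continuousOn htop).const_smul I)

theorem exists_differentiableOn_eq_div_of_simple_zero {f g : ℂ → ℂ} {c : ℂ} {s : Set ℂ}
    (hf : Differentiable ℂ f) (hg : Differentiable ℂ g) (hfc : f c = 0) (hgc : g c = 0)
    (hg' : deriv g c ≠ 0) (hs : ∀ z ∈ s, g z = 0 → z = c) :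
    ∃ F : ℂ → ℂ, DifferentiableOn ℂ F s ∧ ∀ z, g z ≠ 0 → F z = f z / g z := by
  have dslope_differentiable {φ : ℂ → ℂ} (hφ : Differentiable ℂ φ) :
      Differentiable ℂ (dslope φ c) :=
    differentiableOn_univ.1 ((differentiableOn_dslope univ_mem).2 hφ.differentiableOn)
  refine ⟨fun z => dslope f c z / dslope g c z, fun z hz => ?_, fun z hz => ?_⟩
  · refine ((dslope_differentiable hf z).div (dslope_differentiable hg z)
      ?_).differentiableWithinAt
    rcases eq_or_ne z c with rfl | hzc
    · rwa [dslope_same]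
    · rw [dslope_of_ne _ hzc, slope_def_field, hgc, sub_zero]
      exact div_ne_zero (fun h0 => hzc (hs z hz h0)) (sub_ne_zero.2 hzc)
  · have hzc : z ≠ c := by rintro rfl; exact hz hgc
    simp only [dslope_of_ne _ hzc, slope_def_field, hfc, hgc, sub_zero,
      div_div_div_cancel_right₀ (sub_ne_zero.2 hzc)]

end Strip

section Hyperbolic

open Filter Topology Set Asymptotics

theorem eq_zero_of_sinh_eq_zero {w : ℂ} (hw : |w.im| < Real.pi) (h : sinh w = 0) : w = 0 := by
  have sinh_eq : sinh w = ((Real.sinh w.re * Real.cos w.im : ℝ) : ℂ) +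
      ((Real.cosh w.re * Real.sin w.im : ℝ) : ℂ) * I := by
    conv_lhs => rw [← re_add_im w, sinh_add, sinh_mul_I, cosh_mul_I]
    push_cast
    ring
  simp only [h, Complex.ext_iff, add_re, add_im, mul_I_re, mul_I_im, ofReal_re, ofReal_im, zero_re,
    zero_im, neg_zero, add_zero, zero_add] at sinh_eq
  obtain ⟨sinh_mul_cos, cosh_mul_sin⟩ := sinh_eq
  have him : w.im = 0 := (Real.sin_eq_zero_iff_of_lt_of_lt (abs_lt.1 hw).1 (abs_lt.1 hw).2).1
    ((mul_eq_zero.1 cosh_mul_sin.symm).resolve_left (Real.cosh_pos _).ne')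
  have hre : w.re = 0 := by simpa [him] using sinh_mul_cos.symm
  exact Complex.ext hre him

theorem prod_sinh_sub_ne_zero {n : ℕ} {t : Fin n → ℂ} (ht : ∀ j, |(t j).im| < Real.pi / 2)
    (htd : ∀ j k, j < k → t j ≠ t k) :
    ∏ q : Fin n × Fin n with q.1 < q.2, sinh (t q.1 - t q.2) ≠ 0 :=
  Finset.prod_ne_zero_iff.2 fun q hq h => by
    refine htd q.1 q.2 (Finset.mem_filter.1 hq).2 (sub_eq_zero.1 (eq_zero_of_sinh_eq_zero ?_ h))
    rw [sub_im, abs_lt]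
    constructor <;> linarith [abs_lt.1 (ht q.1), abs_lt.1 (ht q.2)]

theorem cosh_sub_eq_neg_I_mul_sinh (a z : ℂ) :
    cosh (a - z) = -I * sinh (a + Real.pi / 2 * I - z) := by
  rw [show a + Real.pi / 2 * I - z = a - z + Real.pi / 2 * I by ring, sinh_add, sinh_mul_I,
    cosh_mul_I, cos_pi_div_two, sin_pi_div_two]
  linear_combination cosh (a - z) * I_mul_I

theorem eq_add_pi_div_two_mul_I_of_cosh_sub_eq_zero {a z : ℂ} (ha : |a.im| < Real.pi / 2)
    (hz : z ∈ closedStrip Real.pi) (h : cosh (a - z) = 0) : z = a + Real.pi / 2 * I := by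
  have him : (a + Real.pi / 2 * I - z).im = a.im + Real.pi / 2 - z.im := by simp
  rw [cosh_sub_eq_neg_I_mul_sinh, mul_eq_zero, or_iff_right (neg_ne_zero.2 I_ne_zero)] at h
  refine (sub_eq_zero.1 (eq_zero_of_sinh_eq_zero ?_ h)).symm
  rw [him, abs_lt]
  constructor <;> linarith [abs_lt.1 ha, hz.1, hz.2, Real.pi_pos]

theorem cosh_sub_ofReal_ne_zero {a : ℂ} (ha : |a.im| < Real.pi / 2) (x : ℝ) :
    cosh (a - x) ≠ 0 := by
  intro h
  have him : 0 = a.im + Real.pi / 2 := by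
    simpa using congrArg im (eq_add_pi_div_two_mul_I_of_cosh_sub_eq_zero ha
      (by simp [closedStrip, Real.pi_pos.le]) h)
  linarith [abs_lt.1 ha]

theorem exp_abs_re_div_four_le_norm_cosh {w : ℂ} (hw : 1 ≤ |w.re|) :
    Real.exp |w.re| / 4 ≤ ‖cosh w‖ := by
  wlog hre : 0 ≤ w.re generalizing w
  · simpa using this (w := -w) (by simpa using hw) (by simpa using (not_le.1 hre).le)
  rw [abs_of_nonneg hre] at hw ⊢
  have triangle : ‖cexp w‖ - ‖cexp (-w)‖ ≤ 2 * ‖cosh w‖ := by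
    simpa [← two_cosh] using norm_sub_le_norm_add (cexp w) (cexp (-w))
  have norm_exp_neg_le : ‖cexp (-w)‖ ≤ 1 := by simpa [Complex.norm_exp] using hre
  rw [Complex.norm_exp w] at triangle
  linarith [Real.add_one_le_exp w.re]

theorem eventually_exp_div_four_le_norm_cosh_sub (a : ℂ) (h : ℝ) :
    ∀ᶠ z in stripEnd h (cocompact ℝ), Real.exp (|z.re| - |a.re|) / 4 ≤ ‖cosh (a - z)‖ := by
  filter_upwards [(tendsto_norm_cocompact_atTop.comp tendsto_re_stripEnd).eventually_ge_atTop
    (|a.re| + 1)] with z hz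
  have re_le : |z.re| - |a.re| ≤ |(a - z).re| := by
    rw [sub_re, abs_sub_comm]
    exact abs_sub_abs_le_abs_sub _ _
  have one_le : 1 ≤ |(a - z).re| := by linarith [show |a.re| + 1 ≤ |z.re| from hz]
  calc Real.exp (|z.re| - |a.re|) / 4 ≤ Real.exp |(a - z).re| / 4 := by gcongr
    _ ≤ ‖cosh (a - z)‖ := exp_abs_re_div_four_le_norm_cosh one_le

theorem eventually_cosh_sub_ne_zero (a : ℂ) (h : ℝ) :
    ∀ᶠ z in stripEnd h (cocompact ℝ), cosh (a - z) ≠ 0 := by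
  filter_upwards [eventually_exp_div_four_le_norm_cosh_sub a h] with z hz
  exact norm_pos_iff.1 (lt_of_lt_of_le (by positivity) hz)

theorem isBigO_inv_cosh_sub (a : ℂ) (h : ℝ) :
    (fun z => (cosh (a - z))⁻¹) =O[stripEnd h (cocompact ℝ)] fun z => Real.exp (-|z.re|) := by
  refine IsBigO.of_bound (4 * Real.exp |a.re|) ?_
  filter_upwards [eventually_exp_div_four_le_norm_cosh_sub a h] with z hz
  rw [norm_inv, Real.norm_of_nonneg (Real.exp_pos _).le]
  calc ‖cosh (a - z)‖⁻¹ ≤ (Real.exp (|z.re| - |a.re|) / 4)⁻¹ := by gcongr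
    _ = 4 * Real.exp |a.re| * Real.exp (-|z.re|) := by
        rw [inv_div, div_eq_mul_inv, ← Real.exp_neg, neg_sub, sub_eq_add_neg, Real.exp_add]
        ring

theorem isBigO_exp_I_mul_mul (p : ℂ) (h : ℝ) (l : Filter ℝ) :
    (fun z => cexp (I * (z * p))) =O[stripEnd h l] fun z => Real.exp (|p.im| * |z.re|) := by
  refine IsBigO.of_bound (Real.exp (h * |p.re|)) ?_
  filter_upwards [mem_inf_of_right (mem_principal_self _)] with z hz
  have re_part : -(z.re * p.im) ≤ |p.im| * |z.re| := by
    rw [mul_comm |p.im|, ← abs_mul]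
    exact neg_le_abs _
  have im_part : -(z.im * p.re) ≤ h * |p.re| :=
    calc -(z.im * p.re) ≤ |z.im| * |p.re| := abs_mul z.im p.re ▸ neg_le_abs _
      _ ≤ h * |p.re| := by
        gcongr
        exact (abs_of_nonneg hz.1).trans_le hz.2
  rw [Complex.norm_exp, Real.norm_of_nonneg (Real.exp_pos _).le, ← Real.exp_add, Real.exp_le_exp]
  simp only [mul_re, mul_im, I_re, I_im]
  linarith

theorem tendsto_tanh_comap_re_atTop : Tendsto tanh (comap re atTop) (𝓝 1) := by
  have tanh_eq (w : ℂ) : tanh w = (1 - cexp (-2 * w)) / (1 + cexp (-2 * w)) := by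
    have exp_sub : cexp w * (1 - cexp (-2 * w)) = 2 * sinh w := by
      rw [two_sinh, mul_sub, mul_one, ← Complex.exp_add]; ring_nf
    have exp_add : cexp w * (1 + cexp (-2 * w)) = 2 * cosh w := by
      rw [two_cosh, mul_add, mul_one, ← Complex.exp_add]; ring_nf
    rw [← mul_div_mul_left _ _ (Complex.exp_ne_zero w), exp_sub, exp_add,
      mul_div_mul_left _ _ two_ne_zero, tanh_eq_sinh_div_cosh]
  have exp_tendsto : Tendsto (fun w : ℂ => cexp (-2 * w)) (comap re atTop) (𝓝 0) := by
    refine tendsto_exp_comap_re_atBot.comp (tendsto_comap_iff.2 ?_)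
    simpa [Function.comp_def] using tendsto_comap.const_mul_atTop_of_neg (r := (-2 : ℝ)) (by simp)
  simpa [funext tanh_eq, Pi.div_def] using
    (exp_tendsto.const_sub 1).div (exp_tendsto.const_add 1) (by simp)

theorem tendsto_tanh_sub_stripEnd_atBot (a : ℂ) (h : ℝ) :
    Tendsto (fun z => tanh (a - z)) (stripEnd h atBot) (𝓝 1) := by
  refine tendsto_tanh_comap_re_atTop.comp (tendsto_comap_iff.2 ?_)
  simpa [Function.comp_def, sub_eq_add_neg] using tendsto_atTop_add_const_left _ a.re
    (tendsto_neg_atBot_atTop.comp (tendsto_re_stripEnd (h := h)))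

theorem tendsto_tanh_sub_stripEnd_atTop (a : ℂ) (h : ℝ) :
    Tendsto (fun z => tanh (a - z)) (stripEnd h atTop) (𝓝 (-1)) := by
  have tanh_flip (z : ℂ) : -tanh (z - a) = tanh (a - z) := by rw [← tanh_neg, neg_sub]
  simp only [← tanh_flip]
  refine (tendsto_tanh_comap_re_atTop.comp (tendsto_comap_iff.2 ?_)).neg
  simpa [Function.comp_def, sub_eq_add_neg] using tendsto_atTop_add_const_right _ (-a.re)
    (tendsto_re_stripEnd (h := h))

theorem exists_differentiableOn_eq_sub_mul_tanh {f : ℂ → ℂ} (hf : Differentiable ℂ f) {a : ℂ}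
    (ha : |a.im| < Real.pi / 2) :
    ∃ F : ℂ → ℂ, DifferentiableOn ℂ F (closedStrip Real.pi) ∧
      ∀ z, cosh (a - z) ≠ 0 → F z = (f z - f (a + Real.pi / 2 * I)) * tanh (a - z) := by
  have sub_pole : a - (a + Real.pi / 2 * I) = -(Real.pi / 2 * I) := by ring
  have hasDerivAt_cosh_sub (z : ℂ) : HasDerivAt (fun z => cosh (a - z)) (-sinh (a - z)) z := by
    simpa using ((hasDerivAt_id z).const_sub a).ccosh
  obtain ⟨F, hF, hF_eq⟩ := exists_differentiableOn_eq_div_of_simple_zero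
    (f := fun z => (f z - f (a + Real.pi / 2 * I)) * sinh (a - z)) (g := fun z => cosh (a - z))
    (c := a + Real.pi / 2 * I) (s := closedStrip Real.pi) (by fun_prop) (by fun_prop) (by simp)
    (by simp [sub_pole, cosh_mul_I]) (by
      rw [(hasDerivAt_cosh_sub _).deriv, sub_pole]
      simp [sinh_mul_I])
    fun z hz => eq_add_pi_div_two_mul_I_of_cosh_sub_eq_zero ha hz
  exact ⟨F, hF, fun z hz => by rw [hF_eq z hz, mul_div_assoc, tanh_eq_sinh_div_cosh]⟩

end Hyperbolic

section Kernel

open Filter Topology Set Asymptotics Matrix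

/-- The function `e^{ipz} sinh (a - b) / (cosh (a - z) cosh (b - z))` of `z`. Along the strip
`0 ≤ Im z ≤ π` it decays like `e^{-(2 - |Im p|) |Re z|}`, and if `|Im a|, |Im b| < π/2` its only
possible poles there are `a + iπ/2` and `b + iπ/2`. -/
noncomputable def coshKernel (p a b z : ℂ) : ℂ :=
  cexp (I * (z * p)) * (sinh (a - b) / (cosh (a - z) * cosh (b - z)))

variable {p a b z : ℂ}

theorem coshKernel_eq_exp_mul_tanh_sub_tanh (ha : cosh (a - z) ≠ 0) (hb : cosh (b - z) ≠ 0) :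
    coshKernel p a b z = cexp (I * (z * p)) * (tanh (a - z) - tanh (b - z)) := by
  rw [coshKernel, tanh_eq_sinh_div_cosh, tanh_eq_sinh_div_cosh, ← sub_sub_sub_cancel_right a b z,
    sinh_sub (a - z)]
  field_simp

theorem coshKernel_add_pi_mul_I (p a b z : ℂ) :
    coshKernel p a b (z + Real.pi * I) = cexp (-(Real.pi * p)) * coshKernel p a b z := by
  have exponent : I * ((z + Real.pi * I) * p) = -(Real.pi * p) + I * (z * p) := by
    linear_combination (Real.pi * p) * I_mul_I
  rw [coshKernel, coshKernel, exponent, Complex.exp_add, ← sub_sub a, ← sub_sub b,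
    cosh_sub_pi_mul_I, cosh_sub_pi_mul_I, neg_mul_neg, mul_assoc]

theorem isBigO_coshKernel (p a b : ℂ) (h : ℝ) :
    coshKernel p a b =O[stripEnd h (cocompact ℝ)]
      fun z => Real.exp (-((2 - |p.im|) * |z.re|)) := by
  have factors := (isBigO_exp_I_mul_mul p h (cocompact ℝ)).mul
    (((isBigO_inv_cosh_sub a h).mul (isBigO_inv_cosh_sub b h)).const_mul_left (sinh (a - b)))
  refine factors.congr (fun z => ?_) fun z => ?_
  · rw [coshKernel, div_eq_mul_inv, mul_inv]
  · rw [← Real.exp_add, ← Real.exp_add]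
    ring_nf

theorem tendsto_coshKernel_stripEnd (hp : |p.im| < 2) (a b : ℂ) (h : ℝ) :
    Tendsto (coshKernel p a b) (stripEnd h (cocompact ℝ)) (𝓝 0) := by
  refine (isBigO_coshKernel p a b h).trans_tendsto ?_
  exact Real.tendsto_exp_neg_atTop_nhds_zero.comp ((tendsto_norm_cocompact_atTop.comp
    tendsto_re_stripEnd).const_mul_atTop (sub_pos.2 hp))

theorem integrable_exp_neg_mul_abs {c : ℝ} (hc : 0 < c) :
    Integrable fun x : ℝ => Real.exp (-(c * |x|)) := by
  rw [← integrableOn_univ, ← Iic_union_Ioi (a := (0 : ℝ)), integrableOn_union]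
  constructor
  · refine (integrableOn_exp_mul_Iic hc 0).congr_fun (fun x hx => ?_) measurableSet_Iic
    simp only [abs_of_nonpos (mem_Iic.1 hx), mul_neg, neg_neg]
  · refine (integrableOn_exp_mul_Ioi (neg_neg_of_pos hc) 0).congr_fun (fun x hx => ?_)
      measurableSet_Ioi
    simp only [abs_of_pos (mem_Ioi.1 hx), neg_mul]

theorem integrable_coshKernel (hp : |p.im| < 2) (ha : |a.im| < Real.pi / 2)
    (hb : |b.im| < Real.pi / 2) : Integrable fun x : ℝ => coshKernel p a b x := by
  have continuous_coshKernel : Continuous fun x : ℝ => coshKernel p a b x := by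
    unfold coshKernel
    exact Continuous.mul (by fun_prop) (Continuous.div (by fun_prop) (by fun_prop) fun x =>
      mul_ne_zero (cosh_sub_ofReal_ne_zero ha x) (cosh_sub_ofReal_ne_zero hb x))
  exact continuous_coshKernel.locallyIntegrable.integrable_of_isBigO_cocompact
    ((isBigO_coshKernel p a b 0).comp_tendsto (tendsto_ofReal_stripEnd le_rfl))
    ((integrable_exp_neg_mul_abs (sub_pos.2 hp)).integrableAtFilter _)

theorem exists_differentiableOn_eq_coshKernel_sub (p : ℂ) (ha : |a.im| < Real.pi / 2)
    (hb : |b.im| < Real.pi / 2) :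
    ∃ K : ℂ → ℂ, DifferentiableOn ℂ K (closedStrip Real.pi) ∧
      ∀ z, cosh (a - z) ≠ 0 → cosh (b - z) ≠ 0 → K z = coshKernel p a b z -
        (cexp (I * ((a + Real.pi / 2 * I) * p)) * tanh (a - z) -
          cexp (I * ((b + Real.pi / 2 * I) * p)) * tanh (b - z)) := by
  have hexp : Differentiable ℂ fun z => cexp (I * (z * p)) := by fun_prop
  obtain ⟨F, hF, hF_eq⟩ := exists_differentiableOn_eq_sub_mul_tanh hexp ha
  obtain ⟨G, hG, hG_eq⟩ := exists_differentiableOn_eq_sub_mul_tanh hexp hb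
  refine ⟨fun z => F z - G z, hF.sub hG, fun z haz hbz => ?_⟩
  simp only [hF_eq z haz, hG_eq z hbz, coshKernel_eq_exp_mul_tanh_sub_tanh haz hbz]
  ring

theorem one_sub_exp_mul_integral_coshKernel (hp : |p.im| < 2) (ha : |a.im| < Real.pi / 2)
    (hb : |b.im| < Real.pi / 2) :
    (1 - cexp (-(Real.pi * p))) * ∫ x : ℝ, coshKernel p a b x =
      -(2 * Real.pi * I) * (cexp (I * ((a + Real.pi / 2 * I) * p)) -
        cexp (I * ((b + Real.pi / 2 * I) * p))) := by
  obtain ⟨K, hK, hK_eq⟩ := exists_differentiableOn_eq_coshKernel_sub p ha hb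
  set A := cexp (I * ((a + Real.pi / 2 * I) * p))
  set B := cexp (I * ((b + Real.pi / 2 * I) * p))
  have K_limit {l : Filter ℝ} (hl : l ≤ cocompact ℝ) {s : ℂ}
      (hs : ∀ u : ℂ, Tendsto (fun z => tanh (u - z)) (stripEnd Real.pi l) (𝓝 s)) :
      Tendsto K (stripEnd Real.pi l) (𝓝 (0 - (A * s - B * s))) := by
    refine (((tendsto_coshKernel_stripEnd hp a b Real.pi).mono_left (stripEnd_mono hl)).sub
      (((hs a).const_mul A).sub ((hs b).const_mul B))).congr' ?_
    filter_upwards [stripEnd_mono hl (eventually_cosh_sub_ne_zero a Real.pi),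
      stripEnd_mono hl (eventually_cosh_sub_ne_zero b Real.pi)] with z haz hbz
    exact (hK_eq z haz hbz).symm
  have K_sub_shift (x : ℝ) : K x - K (x + Real.pi * I) =
      (1 - cexp (-(Real.pi * p))) * coshKernel p a b x := by
    have hax := cosh_sub_ofReal_ne_zero ha x
    have hbx := cosh_sub_ofReal_ne_zero hb x
    rw [hK_eq x hax hbx, hK_eq _ (by simpa [← sub_sub] using hax)
      (by simpa [← sub_sub] using hbx), coshKernel_add_pi_mul_I, ← sub_sub, ← sub_sub,
      tanh_sub_pi_mul_I, tanh_sub_pi_mul_I]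
    ring
  have contour_limit := tendsto_integral_sub_shift_of_differentiableOn_strip Real.pi_pos.le hK
    (K_limit atBot_le_cocompact fun u => tendsto_tanh_sub_stripEnd_atBot u Real.pi)
    (K_limit atTop_le_cocompact fun u => tendsto_tanh_sub_stripEnd_atTop u Real.pi)
  simp only [K_sub_shift, intervalIntegral.integral_const_mul] at contour_limit
  have integral_limit := (intervalIntegral_tendsto_integral (integrable_coshKernel hp ha hb)
    tendsto_neg_atTop_atBot tendsto_id).const_mul (1 - cexp (-(Real.pi * p)))
  refine (tendsto_nhds_unique integral_limit contour_limit).trans ?_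
  simp only [real_smul, smul_eq_mul]
  ring

theorem integral_coshKernel (hp : |p.im| < 2) (hp0 : p ≠ 0) (ha : |a.im| < Real.pi / 2)
    (hb : |b.im| < Real.pi / 2) :
    ∫ x : ℝ, coshKernel p a b x = -I * Real.pi / sinh (Real.pi * p / 2) *
      (cexp (I * (a * p)) - cexp (I * (b * p))) := by
  have sinh_ne : sinh (Real.pi * p / 2) ≠ 0 := fun h => by
    have him : (Real.pi * p / 2).im = Real.pi / 2 * p.im := by
      rw [mul_div_right_comm, ← ofReal_ofNat, ← ofReal_div, im_ofReal_mul]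
    have := eq_zero_of_sinh_eq_zero (by
      rw [him, abs_mul, abs_of_pos Real.pi_div_two_pos]
      nlinarith [Real.pi_pos]) h
    simp [hp0, Real.pi_ne_zero] at this
  have exp_pole (u : ℂ) : cexp (I * ((u + Real.pi / 2 * I) * p)) =
      cexp (-(Real.pi * p / 2)) * cexp (I * (u * p)) := by
    rw [← Complex.exp_add]
    congr 1
    linear_combination (Real.pi / 2 * p) * I_mul_I
  have one_sub_exp : 1 - cexp (-(Real.pi * p)) =
      cexp (-(Real.pi * p / 2)) * (2 * sinh (Real.pi * p / 2)) := by
    rw [two_sinh, mul_sub, ← Complex.exp_add, ← Complex.exp_add, neg_add_cancel, Complex.exp_zero]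
    ring_nf
  have h := one_sub_exp_mul_integral_coshKernel hp ha hb
  rw [exp_pole, exp_pole, one_sub_exp] at h
  rw [div_mul_eq_mul_div, eq_div_iff sinh_ne]
  refine mul_left_cancel₀ (mul_ne_zero two_ne_zero (Complex.exp_ne_zero (-(Real.pi * p / 2)))) ?_
  linear_combination h

theorem det_coshKernel {n : ℕ} (p : Fin n → ℂ) (t : Fin (n + 1) → ℂ) (z : Fin n → ℂ)
    (h : ∀ j k, cosh (t j - z k) ≠ 0) :
    (of fun j k => coshKernel (p k) (t j.castSucc) (t (Fin.last n)) (z k)).det =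
      cexp (I * ∑ k, z k * p k) *
        ((∏ q : Fin (n + 1) × Fin (n + 1) with q.1 < q.2, sinh (t q.1 - t q.2)) *
          (∏ q : Fin n × Fin n with q.1 < q.2, sinh (z q.1 - z q.2)) /
            ∏ j, ∏ k, cosh (t j - z k)) := by
  rw [Finset.mul_sum, Complex.exp_sum, ← det_sinh_sub_div_cosh_mul_cosh t z h, ← det_mul_row]
  rfl

theorem det_integral_coshKernel {n : ℕ} {p : Fin n → ℂ} {t : Fin (n + 1) → ℂ}
    (hp : ∀ k, |(p k).im| < 2) (hp0 : ∀ k, p k ≠ 0) (ht : ∀ j, |(t j).im| < Real.pi / 2) :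
    (of fun j k => ∫ x : ℝ, coshKernel (p k) (t j.castSucc) (t (Fin.last n)) x).det =
      (∏ k, -I * Real.pi / sinh (Real.pi * p k / 2)) *
        ∑ τ : Equiv.Perm (Fin (n + 1)), ((Equiv.Perm.sign τ : ℤ) : ℂ) *
          cexp (I * ∑ j : Fin n, t (τ j.castSucc) * p j) := by
  have exp_sum (τ : Equiv.Perm (Fin (n + 1))) : cexp (I * ∑ j : Fin n, t (τ j.castSucc) * p j) =
      ∏ j : Fin n, cexp (I * (t (τ j.castSucc) * p j)) := by
    rw [Finset.mul_sum, Complex.exp_sum]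
  have expand := det_sub_last_row (of fun j k => cexp (I * (t j * p k)))
  simp only [of_apply] at expand
  simp only [integral_coshKernel (hp _) (hp0 _) (ht _) (ht _), exp_sum, ← expand]
  exact det_mul_row _ _

end Kernel

/-- Explicit evaluation of the integral `I_N(p,t)` (Lemma C.1). -/
theorem statement1 (N : ℕ) (hN : 1 ≤ N) (p : Fin N → ℂ) (t : Fin (N + 1) → ℂ)
    (hp : ∀ i : Fin N, |(p i).im| < 2)
    (hp0 : ∀ i : Fin N, p i ≠ 0)
    (ht : ∀ j : Fin (N + 1), |(t j).im| < Real.pi / 2)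
    (htd : ∀ j k : Fin (N + 1), j < k → t j ≠ t k) :
    ∫ z : Fin N → ℝ,
      Complex.exp (Complex.I * ∑ i : Fin N, (z i : ℂ) * p i) *
        (∏ q ∈ Finset.univ.filter (fun q : Fin N × Fin N => q.1 < q.2),
          Complex.sinh ((z q.1 : ℂ) - (z q.2 : ℂ))) /
        ∏ j : Fin (N + 1), ∏ k : Fin N, Complex.cosh (t j - (z k : ℂ))
    = (∏ j : Fin N, (-Complex.I * (Real.pi : ℂ)) / Complex.sinh ((Real.pi : ℂ) * p j / 2)) *
      (∏ q ∈ Finset.univ.filter (fun q : Fin (N + 1) × Fin (N + 1) => q.1 < q.2),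
        1 / Complex.sinh (t q.1 - t q.2)) *
      ∑ τ : Equiv.Perm (Fin (N + 1)), ((Equiv.Perm.sign τ : ℤ) : ℂ) *
        Complex.exp (Complex.I * ∑ j : Fin N, t (τ (Fin.castSucc j)) * p j) := by
  have cosh_ne (z : Fin N → ℝ) (j k) : cosh (t j - z k) ≠ 0 := cosh_sub_ofReal_ne_zero (ht j) _
  have prod_sinh_ne := prod_sinh_sub_ne_zero ht htd
  have integrand_eq (z : Fin N → ℝ) :
      cexp (I * ∑ i, z i * p i) * (∏ q : Fin N × Fin N with q.1 < q.2, sinh (z q.1 - z q.2)) /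
          ∏ j, ∏ k, cosh (t j - z k) =
        (∏ q : Fin (N + 1) × Fin (N + 1) with q.1 < q.2, sinh (t q.1 - t q.2))⁻¹ *
          (Matrix.of fun j k => coshKernel (p k) (t j.castSucc) (t (Fin.last N)) (z k)).det := by
    rw [det_coshKernel p t _ (cosh_ne z)]
    field_simp
  simp only [integrand_eq, integral_const_mul, one_div, Finset.prod_inv_distrib]
  rw [volume_pi, integral_det_eq_det_integral fun j k =>
    integrable_coshKernel (hp k) (ht j.castSucc) (ht (Fin.last N)),
    det_integral_coshKernel hp hp0 ht]
  ring
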